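/- Let g: ℝ^m × ℝ → ℝ with (x,y) ↦ g(x,y) twice continuously differentiable in x and differentiable in y at (q, y₀) with ∂g/∂y(q,y₀) = f(q,y₀), and K a second-order kernel as above. For y_n → y₀, the bias satisfies (1/Δ_n)∫ ∏_j K((q_j − x_j)/δ_{n,j}) g(x, y_n) dx − g(q, y₀) = (κ₂/2) Σ_j δ_{n,j}² ∂²g/∂x_j²(q, y₀) + f(q,y₀)(y_n − y₀) + Σ_j o(δ_{n,j}²) + o(y_n − y₀) as n → ∞. -/

import Mathlib

open MeasureTheory Filter Asymptotics

/-!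
Substituting `x = q - δ_n ⊙ t` turns the rescaled integral into
`∫ ∏ j, K (t j) * g (q - δ_n ⊙ t, y_n)`, whose weight is fixed and compactly supported. Uniformly
for `t` in its support, `g` differs from its Taylor polynomial at `(q, y₀)`, of order two in `x` and
of order one in `y`, by `o(‖δ_n‖² + |y_n - y₀|)`: every second-order term involving `y_n - y₀` is
`o(|y_n - y₀|)`. Integrating the polynomial against the product kernel only involves moments: the
first moments and the off-diagonal second moments vanish, and each diagonal second moment is `κ₂`.
-/

open scoped Topology

section Taylor

theorem isBigO_norm_sq_prod {E G : Type*} [NormedAddCommGroup E] [NormedAddCommGroup G] :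
    (fun v : E × G => ‖v‖ ^ 2) =O[𝓝 0] fun v => ‖v.1‖ ^ 2 + ‖v.2‖ := by
  refine IsBigO.of_bound 1 ?_
  filter_upwards [Metric.ball_mem_nhds (0 : E × G) one_pos] with v hv
  have hv2 : ‖v.2‖ ≤ 1 := (norm_snd_le v).trans (mem_ball_zero_iff.1 hv).le
  rw [one_mul, norm_pow, norm_norm, Real.norm_of_nonneg (by positivity), Prod.norm_def]
  rcases max_choice ‖v.1‖ ‖v.2‖ with h | h <;> rw [h]
  · exact le_add_of_nonneg_right (norm_nonneg _)
  · nlinarith [norm_nonneg v.2, sq_nonneg ‖v.1‖]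

variable {E G H : Type*} [NormedAddCommGroup E] [NormedSpace ℝ E] [NormedAddCommGroup G]
  [NormedSpace ℝ G] [NormedAddCommGroup H] [NormedSpace ℝ H]

theorem isLittleO_taylor_two {F : E → H} {F' : E → E →L[ℝ] H} {F'' : E →L[ℝ] E →L[ℝ] H} {p : E}
    (hF : ∀ᶠ x in 𝓝 p, HasFDerivAt F (F' x) x) (hF' : HasFDerivAt F' F'' p) :
    (fun x => F x - (F p + F' p (x - p) + (1 / 2 : ℝ) • F'' (x - p) (x - p)))
      =o[𝓝 p] fun x => ‖x - p‖ ^ 2 := by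
  obtain ⟨r, hr, hball⟩ := Metric.eventually_nhds_iff_ball.1 hF
  have hremainder : ∀ x ∈ Metric.ball p r,
      HasFDerivWithinAt (fun x => F x - F' p (x - p) - (1 / 2 : ℝ) • F'' (x - p) (x - p))
        (F' x - F' p - F'' (x - p)) (Metric.ball p r) x := by
    intro x hx
    have hsub := hasFDerivAt_sub_const (𝕜 := ℝ) (x := x) p
    have hlin := (F' p).hasFDerivAt.comp x hsub
    have hquad := (F''.hasFDerivAt.comp x hsub).clm_apply hsub
    convert! (((hball x hx).sub hlin).sub (hquad.const_smul (1 / 2 : ℝ))).hasFDerivWithinAt using 1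
    ext v
    have hsymm : F'' v (x - p) = F'' (x - p) v :=
      second_derivative_symmetric_of_eventually hF hF' v (x - p)
    simp only [sub_apply, add_apply, smul_apply, ContinuousLinearMap.comp_apply,
      ContinuousLinearMap.flip_apply, ContinuousLinearMap.id_apply, Function.comp_apply, hsymm]
    module
  have hderiv : (fun x => F' x - F' p - F'' (x - p)) =o[𝓝[Metric.ball p r] p]
      fun x => ‖x - p‖ ^ 1 := by
    simpa only [pow_one] using hF'.isLittleO.norm_right.mono nhdsWithin_le_nhds
  have hmean := (convex_ball p r).isLittleO_pow_succ (Metric.mem_ball_self hr) hremainder hderiv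
  rw [Metric.isOpen_ball.nhdsWithin_eq (Metric.mem_ball_self hr)] at hmean
  refine hmean.congr_left fun x => ?_
  simp only [sub_self, map_zero, smul_zero, sub_zero]
  abel

/-- The Taylor polynomial at `p` of a function of two variables, of order two in the first variable
and of order one in the second. -/
noncomputable def mixedTaylor (F : E × G → H) (p x : E × G) : H :=
  F p + fderiv ℝ F p (x - p)
    + (1 / 2 : ℝ) • fderiv ℝ (fderiv ℝ F) p (x.1 - p.1, 0) (x.1 - p.1, 0)

theorem isLittleO_bilinear_sub_bilinear_fst (B : E × G →L[ℝ] E × G →L[ℝ] H) :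
    (fun v : E × G => B v v - B (v.1, 0) (v.1, 0)) =o[𝓝 0] fun v => ‖v.1‖ ^ 2 + ‖v.2‖ := by
  have hcross (v : E × G) : B v v - B (v.1, 0) (v.1, 0) = B v (0, v.2) + B (0, v.2) (v.1, 0) := by
    rw [show ((0, v.2) : E × G) = v - (v.1, 0) by ext <;> simp]
    simp only [map_sub, sub_apply]
    abel
  have hnorm_inr (v : E × G) : ‖((0, v.2) : E × G)‖ = ‖v.2‖ := by simp [Prod.norm_def]
  have hnorm_inl (v : E × G) : ‖((v.1, 0) : E × G)‖ ≤ ‖v‖ := by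
    simp [Prod.norm_def]
  have hbound : (fun v : E × G => B v v - B (v.1, 0) (v.1, 0)) =O[𝓝 0] fun v => ‖v‖ * ‖v.2‖ := by
    refine IsBigO.of_bound (2 * ‖B‖) (Eventually.of_forall fun v => ?_)
    rw [hcross, norm_mul, norm_norm, norm_norm]
    calc ‖B v (0, v.2) + B (0, v.2) (v.1, 0)‖
        ≤ ‖B‖ * ‖v‖ * ‖((0, v.2) : E × G)‖ + ‖B‖ * ‖((0, v.2) : E × G)‖ * ‖((v.1, 0) : E × G)‖ :=
          norm_add_le_of_le (B.le_opNorm₂ _ _) (B.le_opNorm₂ _ _)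
      _ ≤ ‖B‖ * ‖v‖ * ‖v.2‖ + ‖B‖ * ‖v.2‖ * ‖v‖ := by
          rw [hnorm_inr]
          gcongr
          exact hnorm_inl v
      _ = 2 * ‖B‖ * (‖v‖ * ‖v.2‖) := by ring
  have hsmall : (fun v : E × G => ‖v‖ * ‖v.2‖) =o[𝓝 0] fun v => ‖v.2‖ := by
    simpa only [one_mul] using
      ((isLittleO_one_iff ℝ).2 tendsto_norm_zero).mul_isBigO
        (isBigO_refl (fun v : E × G => ‖v.2‖) _)
  refine (hbound.trans_isLittleO hsmall).trans_isBigO (IsBigO.of_norm_le fun v => ?_)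
  rw [norm_norm]
  exact le_add_of_nonneg_left (sq_nonneg _)

theorem isLittleO_sub_mixedTaylor {F : E × G → H} {p : E × G} (hF : ContDiffAt ℝ 2 F p) :
    (fun x => F x - mixedTaylor F p x) =o[𝓝 p] fun x => ‖x.1 - p.1‖ ^ 2 + ‖x.2 - p.2‖ := by
  have hF' : ∀ᶠ x in 𝓝 p, HasFDerivAt F (fderiv ℝ F x) x :=
    (hF.eventually (by simp)).mono fun x hx => (hx.differentiableAt two_ne_zero).hasFDerivAt
  have hF'' : HasFDerivAt (fderiv ℝ F) (fderiv ℝ (fderiv ℝ F) p) p :=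
    ((hF.fderiv_right (m := 1) (by norm_num)).differentiableAt one_ne_zero).hasFDerivAt
  have hsub : Tendsto (fun x => x - p) (𝓝 p) (𝓝 0) := tendsto_sub_nhds_zero_iff.2 tendsto_id
  have htaylor := (isLittleO_taylor_two hF' hF'').trans_isBigO
    (isBigO_norm_sq_prod.comp_tendsto hsub)
  have hcross := ((isLittleO_bilinear_sub_bilinear_fst (fderiv ℝ (fderiv ℝ F) p)).comp_tendsto
    hsub).const_smul_left (1 / 2 : ℝ)
  refine (htaylor.add hcross).congr_left fun x => ?_
  simp only [mixedTaylor, Function.comp_apply, Pi.smul_apply, Prod.fst_sub]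
  module

theorem deriv_deriv_comp_of_hasDerivAt_const {F : E → H} {c : ℝ → E} {v : E} {t : ℝ}
    (hc : ∀ s, HasDerivAt c v s) (hF : ContDiffAt ℝ 2 F (c t)) :
    deriv (deriv fun s => F (c s)) t = fderiv ℝ (fderiv ℝ F) (c t) v v := by
  have hfirst : deriv (fun s => F (c s)) =ᶠ[𝓝 t] fun s => fderiv ℝ F (c s) v := by
    filter_upwards [(hc t).continuousAt.eventually (hF.eventually (by simp))] with s hs
    exact ((hs.differentiableAt two_ne_zero).hasFDerivAt.comp_hasDerivAt s (hc s)).deriv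
  have hF' : HasFDerivAt (fderiv ℝ F) (fderiv ℝ (fderiv ℝ F) (c t)) (c t) :=
    ((hF.fderiv_right (m := 1) (by norm_num)).differentiableAt one_ne_zero).hasFDerivAt
  rw [hfirst.deriv_eq]
  simpa using ((hF'.comp_hasDerivAt t (hc t)).clm_apply (hasDerivAt_const t v)).deriv

theorem fderiv_zero_prod_eq_smul_of_hasDerivAt {F : E × ℝ → H} {x : E} {y : ℝ} {F' : H}
    (hF : DifferentiableAt ℝ F (x, y)) (hF' : HasDerivAt (fun s => F (x, s)) F' y)
    (s : ℝ) : fderiv ℝ F (x, y) (0, s) = s • F' := by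
  have hslice := hF.hasFDerivAt.comp_hasDerivAt y ((hasDerivAt_const y x).prodMk (hasDerivAt_id y))
  rw [hF'.unique hslice, ← map_smul]
  simp

theorem deriv_deriv_update_eq_fderiv_fderiv_single {ι : Type*} [Fintype ι] [DecidableEq ι]
    {F : (ι → ℝ) × G → H} {x : ι → ℝ} {y : G} (hF : ContDiffAt ℝ 2 F (x, y)) (j : ι) :
    deriv (deriv fun t => F (Function.update x j t, y)) (x j)
      = fderiv ℝ (fderiv ℝ F) (x, y) (Pi.single j 1, 0) (Pi.single j 1, 0) := by
  have hline (t : ℝ) : HasDerivAt (fun t => (Function.update x j t, y))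
      (Pi.single j 1, (0 : G)) t := (hasDerivAt_update x j t).prodMk (hasDerivAt_const t y)
  have h := deriv_deriv_comp_of_hasDerivAt_const hline (t := x j) (F := F) (by simpa using hF)
  simpa only [Function.update_eq_self] using h

end Taylor

section Smoothing

theorem integrable_smul_of_continuousOn_tsupport {T H : Type*} [TopologicalSpace T] [T2Space T]
    [MeasurableSpace T] [OpensMeasurableSpace T] [NormedAddCommGroup H] [NormedSpace ℝ H]
    [SecondCountableTopologyEither T H] {μ : Measure T} {W : T → ℝ} {f : T → H}
    (hW : Integrable W μ) (hWsupp : HasCompactSupport W) (hf : ContinuousOn f (tsupport W)) :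
    Integrable (fun t => W t • f t) μ :=
  (integrableOn_iff_integrable_of_support_subset
    ((Function.support_smul_subset_left W f).trans (subset_tsupport W))).1
    (hW.integrableOn.smul_continuousOn hf hWsupp)

theorem isLittleO_integral_smul {α T H : Type*} [MeasurableSpace T] [NormedAddCommGroup H]
    [NormedSpace ℝ H] {μ : Measure T} {l : Filter α} {W : T → ℝ} {S : Set T} {r : α → T → H}
    {b : α → ℝ} (hW : Integrable W μ) (hS : Function.support W ⊆ S)
    (hr : (fun p : α × T => r p.1 p.2) =o[l ×ˢ 𝓟 S] fun p => b p.1) :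
    (fun n => ∫ t, W t • r n t ∂μ) =o[l] b := by
  have hM : 0 < ∫ t, ‖W t‖ ∂μ + 1 := by positivity
  refine isLittleO_iff.2 fun ε hε => ?_
  filter_upwards [eventually_prod_principal_iff.1 (hr.def (div_pos hε hM))] with n hn
  have hbound (t : T) : ‖W t • r n t‖ ≤ ‖W t‖ * (ε / (∫ t, ‖W t‖ ∂μ + 1) * ‖b n‖) := by
    rw [norm_smul]
    by_cases ht : W t = 0
    · simp [ht]
    · gcongr
      exact hn t (hS ht)
  calc ‖∫ t, W t • r n t ∂μ‖
      ≤ ∫ t, ‖W t‖ * (ε / (∫ t, ‖W t‖ ∂μ + 1) * ‖b n‖) ∂μ :=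
        norm_integral_le_of_norm_le (hW.norm.mul_const _) (Eventually.of_forall hbound)
    _ = (∫ t, ‖W t‖ ∂μ) / (∫ t, ‖W t‖ ∂μ + 1) * (ε * ‖b n‖) := by
        rw [integral_mul_const]
        ring
    _ ≤ ε * ‖b n‖ := mul_le_of_le_one_left (by positivity) ((div_le_one hM).2 (by linarith))

variable {α T E G H : Type*} [NormedAddCommGroup T] [NormedSpace ℝ T] [NormedAddCommGroup E]
  [NormedSpace ℝ E] [NormedAddCommGroup G] [NormedSpace ℝ G] [NormedAddCommGroup H]
  [NormedSpace ℝ H] {l : Filter α} {D : α → T →L[ℝ] E} {S : Set T}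

theorem isBigO_clm_apply_of_isBounded (hS : Bornology.IsBounded S) :
    (fun p : α × T => D p.1 p.2) =O[l ×ˢ 𝓟 S] fun p => ‖D p.1‖ := by
  obtain ⟨R, hR⟩ := hS.exists_norm_le
  refine IsBigO.of_bound R (eventually_prod_principal_iff.2 (Eventually.of_forall fun n t ht => ?_))
  rw [norm_norm, mul_comm]
  exact (D n).le_opNorm_of_le (hR t ht)

theorem tendsto_clm_apply_prod_principal (hD : Tendsto D l (𝓝 0)) (hS : Bornology.IsBounded S) :
    Tendsto (fun p : α × T => D p.1 p.2) (l ×ˢ 𝓟 S) (𝓝 0) :=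
  (isBigO_clm_apply_of_isBounded hS).trans_tendsto
    ((tendsto_zero_iff_norm_tendsto_zero.1 hD).comp tendsto_fst)

variable [MeasurableSpace T] [OpensMeasurableSpace T] [SecondCountableTopologyEither T H]

theorem isLittleO_integral_smul_sub_integral_smul_mixedTaylor {μ : Measure T} {W : T → ℝ}
    (hW : Integrable W μ) (hWsupp : HasCompactSupport W) {F : E × G → H} {q : E} {y₀ : G}
    (hF : ContDiffAt ℝ 2 F (q, y₀)) (hD : Tendsto D l (𝓝 0)) {y : α → G}
    (hy : Tendsto y l (𝓝 y₀)) :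
    (fun n => ∫ t, W t • F (q + D n t, y n) ∂μ
        - ∫ t, W t • mixedTaylor F (q, y₀) (q + D n t, y n) ∂μ)
      =o[l] fun n => ‖D n‖ ^ 2 + ‖y n - y₀‖ := by
  have hbdd : Bornology.IsBounded (tsupport W) := hWsupp.isCompact.isBounded
  have hpoint : Tendsto (fun p : α × T => (q + D p.1 p.2, y p.1)) (l ×ˢ 𝓟 (tsupport W))
      (𝓝 (q, y₀)) := by
    simpa using ((tendsto_clm_apply_prod_principal hD hbdd).const_add q).prodMk_nhds
      (hy.comp tendsto_fst)
  have hremainder : (fun p : α × T => F (q + D p.1 p.2, y p.1)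
        - mixedTaylor F (q, y₀) (q + D p.1 p.2, y p.1))
      =o[l ×ˢ 𝓟 (tsupport W)] fun p => ‖D p.1‖ ^ 2 + ‖y p.1 - y₀‖ := by
    refine ((isLittleO_sub_mixedTaylor hF).comp_tendsto hpoint).trans_isBigO ?_
    have hsq := (isBigO_clm_apply_of_isBounded (l := l) (D := D) hbdd).norm_left.pow 2
    simpa [Function.comp_def] using hsq.add_add (isBigO_refl (fun p : α × T => ‖y p.1 - y₀‖) _)
  have hcont : ∀ᶠ n in l, ∀ t ∈ tsupport W, ContinuousAt F (q + D n t, y n) :=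
    eventually_prod_principal_iff.1 (hpoint.eventually
      ((hF.eventually (by simp)).mono fun _ hx => hx.continuousAt))
  refine (isLittleO_integral_smul (r := fun n t => F (q + D n t, y n)
    - mixedTaylor F (q, y₀) (q + D n t, y n)) hW (subset_tsupport W) hremainder).congr' ?_ .rfl
  filter_upwards [hcont] with n hn
  have hpath : Continuous fun t => (q + D n t, y n) := by fun_prop
  rw [← integral_sub]
  · simp only [smul_sub]
  · refine integrable_smul_of_continuousOn_tsupport hW hWsupp fun t ht => ?_
    exact ((hn t ht).comp (f := fun t => (q + D n t, y n)) hpath.continuousAt).continuousWithinAt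
  · refine integrable_smul_of_continuousOn_tsupport hW hWsupp (Continuous.continuousOn ?_)
    unfold mixedTaylor
    fun_prop

end Smoothing

theorem norm_sq_le_sum_sq {ι : Type*} [Fintype ι] (x : ι → ℝ) : ‖x‖ ^ 2 ≤ ∑ j, x j ^ 2 := by
  have hsum : 0 ≤ ∑ j, x j ^ 2 := Finset.sum_nonneg fun j _ => sq_nonneg (x j)
  refine (Real.le_sqrt (norm_nonneg x) hsum).1 ((pi_norm_le_iff_of_nonneg (Real.sqrt_nonneg _)).2
    fun j => Real.abs_le_sqrt ?_)
  exact Finset.single_le_sum (fun i _ => sq_nonneg (x i)) (Finset.mem_univ j)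

section ProductKernel

variable {ι : Type*} [Fintype ι]

/-- A compactly supported kernel on the line of order at least two: unit mass and zero mean.
Integrability is encoded by the nonzero value of the integral. -/
structure IsSecondOrderKernel (k : ℝ → ℝ) : Prop where
  hasCompactSupport : HasCompactSupport k
  integral_eq_one : ∫ s, k s = 1
  integral_id_mul_eq_zero : ∫ s, s * k s = 0

/-- The multivariate kernel `t ↦ ∏ j, K j (t j)` with marginals `K j`. -/
def productKernel (K : ι → ℝ → ℝ) (t : ι → ℝ) : ℝ := ∏ j, K j (t j)

theorem IsSecondOrderKernel.integrable {k : ℝ → ℝ} (hk : IsSecondOrderKernel k) : Integrable k :=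
  .of_integral_ne_zero (hk.integral_eq_one ▸ one_ne_zero)

theorem hasCompactSupport_productKernel {K : ι → ℝ → ℝ} (hK : ∀ j, HasCompactSupport (K j)) :
    HasCompactSupport (productKernel K) := by
  refine .intro (isCompact_univ_pi hK) fun t ht => ?_
  obtain ⟨j, hj⟩ : ∃ j, t j ∉ tsupport (K j) := by
    simpa only [Set.mem_univ_pi, not_forall] using ht
  exact Finset.prod_eq_zero (Finset.mem_univ j) (image_eq_zero_of_notMem_tsupport hj)

theorem integrable_productKernel {K : ι → ℝ → ℝ} (hK : ∀ j, Integrable (K j)) :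
    Integrable (productKernel K) :=
  .fintype_prod hK

theorem integrable_productKernel_mul {K : ι → ℝ → ℝ} (hK : ∀ j, IsSecondOrderKernel (K j))
    {f : (ι → ℝ) → ℝ} (hf : Continuous f) : Integrable fun t => productKernel K t * f t :=
  integrable_smul_of_continuousOn_tsupport (integrable_productKernel fun j => (hK j).integrable)
    (hasCompactSupport_productKernel fun j => (hK j).hasCompactSupport) hf.continuousOn

theorem integral_productKernel_mul_prod (K φ : ι → ℝ → ℝ) :
    ∫ t, productKernel K t * ∏ j, φ j (t j) = ∏ j, ∫ s, φ j s * K j s := by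
  simp only [productKernel, ← Finset.prod_mul_distrib, ← integral_fintype_prod_volume_eq_prod,
    mul_comm]

theorem integral_eq_abs_prod_smul_integral_add_mul {H : Type*} [NormedAddCommGroup H]
    [NormedSpace ℝ H] (f : (ι → ℝ) → H) (q : ι → ℝ) {c : ι → ℝ} (hc : ∀ j, c j ≠ 0) :
    ∫ x, f x = |∏ j, c j| • ∫ t, f (q + c * t) := by
  let D : (ι → ℝ) →L[ℝ] ι → ℝ := .pi fun j => (c j • ContinuousLinearMap.id ℝ ℝ).comp (.proj j)
  have hD (t : ι → ℝ) : D t = c * t := by ext j; simp [D]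
  have hdet : D.det = ∏ j, c j := by
    rw [ContinuousLinearMap.det_pi]
    simp
  have hderiv (t : ι → ℝ) : HasFDerivAt (fun t => q + c * t) D t := by
    simpa only [hD] using D.hasFDerivAt.const_add q
  have hinj : Function.Injective fun t => q + c * t := fun s t hst => by
    ext j
    exact mul_left_cancel₀ (hc j) (congrFun (add_left_cancel hst) j)
  have hsurj : Function.Surjective fun t => q + c * t := fun x => by
    refine ⟨fun j => (x j - q j) / c j, ?_⟩
    ext j
    simp [mul_div_cancel₀ _ (hc j)]
  have hchange := integral_image_eq_integral_abs_det_fderiv_smul volume MeasurableSet.univ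
    (fun t _ => (hderiv t).hasFDerivWithinAt) hinj.injOn f
  rwa [Set.image_univ, hsurj.range_eq, Measure.restrict_univ, hdet, integral_smul] at hchange

theorem integral_productKernel_div_mul (K : ι → ℝ → ℝ) (G : (ι → ℝ) → ℝ) (q : ι → ℝ) {δ : ι → ℝ}
    (hδ : ∀ j, 0 < δ j) :
    (1 / ∏ j, δ j) * ∫ x, productKernel K ((q - x) / δ) * G x
      = ∫ t, productKernel K t * G (q + -δ * t) := by
  have hneg : |∏ j, (-δ) j| = ∏ j, δ j := by
    simp only [Finset.abs_prod, Pi.neg_apply, abs_neg, abs_of_pos (hδ _)]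
  have hcancel (t : ι → ℝ) : (q - (q + -δ * t)) / δ = t := by
    ext j
    simp [mul_div_cancel_left₀ _ (hδ j).ne']
  rw [integral_eq_abs_prod_smul_integral_add_mul _ q (c := -δ) fun j => neg_ne_zero.2 (hδ j).ne',
    hneg, smul_eq_mul, one_div, inv_mul_cancel_left₀ (Finset.prod_pos fun j _ => hδ j).ne']
  simp only [hcancel]

variable {K : ι → ℝ → ℝ} (hK : ∀ j, IsSecondOrderKernel (K j))
include hK

theorem integral_productKernel : ∫ t, productKernel K t = 1 := by
  simpa [(hK _).integral_eq_one] using integral_productKernel_mul_prod K fun _ _ => 1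

theorem integral_productKernel_mul_apply (a : ι) : ∫ t, productKernel K t * t a = 0 := by
  classical
  have hfactor := integral_productKernel_mul_prod K fun j s => if j = a then s else 1
  simp only [Finset.prod_ite_eq', Finset.mem_univ, if_true] at hfactor
  rw [hfactor]
  exact Finset.prod_eq_zero (Finset.mem_univ a) (by simpa using (hK a).integral_id_mul_eq_zero)

theorem integral_productKernel_mul_apply_mul_apply [DecidableEq ι] (a b : ι) :
    ∫ t, productKernel K t * (t a * t b) = if a = b then ∫ s, s ^ 2 * K a s else 0 := by
  have hfactor := integral_productKernel_mul_prod K fun j s =>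
    (if j = a then s else 1) * if j = b then s else 1
  simp only [Finset.prod_mul_distrib, Finset.prod_ite_eq', Finset.mem_univ, if_true] at hfactor
  rw [hfactor]
  split_ifs with hab
  · subst hab
    rw [Finset.prod_eq_single_of_mem a (Finset.mem_univ a)]
    · simp [sq]
    · intro j _ hj
      simpa [hj] using (hK j).integral_eq_one
  · exact Finset.prod_eq_zero (Finset.mem_univ a)
      (by simpa [hab] using (hK a).integral_id_mul_eq_zero)

theorem integral_productKernel_mul_linear (L : (ι → ℝ) →L[ℝ] ℝ) :
    ∫ t, productKernel K t * L t = 0 := by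
  classical
  have hcoord (t : ι → ℝ) : productKernel K t * L t
      = ∑ j, productKernel K t * t j * L (Pi.single j 1) := by
    have hexpand : L t = ∑ j, t j * L (Pi.single j 1) := by
      conv_lhs => rw [pi_eq_sum_univ' t]
      simp only [map_sum, map_smul, smul_eq_mul]
    simp only [hexpand, Finset.mul_sum, mul_assoc]
  simp only [hcoord]
  rw [integral_finsetSum _ fun j _ =>
    (integrable_productKernel_mul hK (continuous_apply j)).mul_const _]
  simp only [integral_mul_const, integral_productKernel_mul_apply hK, zero_mul,
    Finset.sum_const_zero]

theorem integral_productKernel_mul_bilinear [DecidableEq ι] (B : (ι → ℝ) →L[ℝ] (ι → ℝ) →L[ℝ] ℝ) :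
    ∫ t, productKernel K t * B t t
      = ∑ j, (∫ s, s ^ 2 * K j s) * B (Pi.single j 1) (Pi.single j 1) := by
  have hcoord (t : ι → ℝ) : productKernel K t * B t t
      = ∑ i, ∑ j, productKernel K t * (t i * t j) * B (Pi.single j 1) (Pi.single i 1) := by
    have hexpand : B t t = ∑ i, ∑ j, t i * (t j * B (Pi.single j 1) (Pi.single i 1)) := by
      conv_lhs => rw [pi_eq_sum_univ' t]
      simp only [map_sum, map_smul, sum_apply, smul_apply, smul_eq_mul, Finset.mul_sum]
    simp only [hexpand, Finset.mul_sum, mul_assoc]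
  have hint (i j : ι) : Integrable fun t =>
      productKernel K t * (t i * t j) * B (Pi.single j 1) (Pi.single i 1) :=
    (integrable_productKernel_mul hK (by fun_prop)).mul_const _
  simp only [hcoord]
  rw [integral_finsetSum _ fun i _ => integrable_finsetSum _ fun j _ => hint i j]
  refine Finset.sum_congr rfl fun i _ => ?_
  rw [integral_finsetSum _ fun j _ => hint i j]
  simp only [integral_mul_const, integral_productKernel_mul_apply_mul_apply hK, ite_mul, zero_mul,
    Finset.sum_ite_eq, Finset.mem_univ, if_true]

theorem integral_productKernel_mul_mixedTaylor [DecidableEq ι] {E G : Type*}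
    [NormedAddCommGroup E] [NormedSpace ℝ E] [NormedAddCommGroup G] [NormedSpace ℝ G]
    (F : E × G → ℝ) (q : E) (y₀ y : G) (D : (ι → ℝ) →L[ℝ] E) :
    ∫ t, productKernel K t * mixedTaylor F (q, y₀) (q + D t, y)
      = F (q, y₀) + fderiv ℝ F (q, y₀) (0, y - y₀)
        + 1 / 2 * ∑ j, (∫ s, s ^ 2 * K j s) * fderiv ℝ (fderiv ℝ F) (q, y₀)
            (D (Pi.single j 1), 0) (D (Pi.single j 1), 0) := by
  set c := F (q, y₀) + fderiv ℝ F (q, y₀) (0, y - y₀) with hc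
  let D' : (ι → ℝ) →L[ℝ] E × G := (ContinuousLinearMap.inl ℝ E G).comp D
  let L : (ι → ℝ) →L[ℝ] ℝ := (fderiv ℝ F (q, y₀)).comp D'
  let B : (ι → ℝ) →L[ℝ] (ι → ℝ) →L[ℝ] ℝ := (fderiv ℝ (fderiv ℝ F) (q, y₀)).bilinearComp D' D'
  have hpoly (t : ι → ℝ) : productKernel K t * mixedTaylor F (q, y₀) (q + D t, y)
      = productKernel K t * c + productKernel K t * L t + 1 / 2 * (productKernel K t * B t t) := by
    have hsplit : (q + D t, y) - (q, y₀) = (0, y - y₀) + D' t := by simp [D']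
    rw [mixedTaylor, hsplit, map_add]
    simp only [ContinuousLinearMap.comp_apply, ContinuousLinearMap.inl_apply,
      ContinuousLinearMap.bilinearComp_apply, add_sub_cancel_left, smul_eq_mul, hc, L, B, D']
    ring
  have hintc := integrable_productKernel_mul hK (continuous_const (y := c))
  have hintL := integrable_productKernel_mul hK L.continuous
  have hintB := integrable_productKernel_mul hK (f := fun t => B t t) (by fun_prop)
  simp only [hpoly]
  rw [integral_add (f := fun t => productKernel K t * c + productKernel K t * L t)
      (hintc.add hintL) (hintB.const_mul _), integral_add hintc hintL,
    integral_mul_const, integral_const_mul, integral_productKernel hK,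
    integral_productKernel_mul_linear hK, integral_productKernel_mul_bilinear hK, one_mul, add_zero]
  simp [B, D']

theorem isLittleO_integral_productKernel_mul_sub [DecidableEq ι] {α E G : Type*} {l : Filter α}
    [NormedAddCommGroup E] [NormedSpace ℝ E] [NormedAddCommGroup G] [NormedSpace ℝ G]
    {F : E × G → ℝ} {q : E} {y₀ : G} (hF : ContDiffAt ℝ 2 F (q, y₀)) {D : α → (ι → ℝ) →L[ℝ] E}
    (hD : Tendsto D l (𝓝 0)) {y : α → G} (hy : Tendsto y l (𝓝 y₀)) :
    (fun n => (∫ t, productKernel K t * F (q + D n t, y n)) - F (q, y₀)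
        - 1 / 2 * ∑ j, (∫ s, s ^ 2 * K j s) * fderiv ℝ (fderiv ℝ F) (q, y₀)
            (D n (Pi.single j 1), 0) (D n (Pi.single j 1), 0)
        - fderiv ℝ F (q, y₀) (0, y n - y₀))
      =o[l] fun n => ‖D n‖ ^ 2 + ‖y n - y₀‖ := by
  refine (isLittleO_integral_smul_sub_integral_smul_mixedTaylor
    (integrable_productKernel fun j => (hK j).integrable)
    (hasCompactSupport_productKernel fun j => (hK j).hasCompactSupport) hF hD hy).congr_left
    fun n => ?_
  simp only [smul_eq_mul, integral_productKernel_mul_mixedTaylor hK]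
  ring

theorem isLittleO_integral_productKernel_neg_mul_sub [DecidableEq ι] {α G : Type*} {l : Filter α}
    [NormedAddCommGroup G] [NormedSpace ℝ G] {F : (ι → ℝ) × G → ℝ} {q : ι → ℝ} {y₀ : G}
    (hF : ContDiffAt ℝ 2 F (q, y₀)) {δ : α → ι → ℝ} (hδ : Tendsto δ l (𝓝 0)) {y : α → G}
    (hy : Tendsto y l (𝓝 y₀)) :
    (fun n => (∫ t, productKernel K t * F (q + -δ n * t, y n)) - F (q, y₀)
        - 1 / 2 * ∑ j, (∫ s, s ^ 2 * K j s) * (δ n j ^ 2 *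
            fderiv ℝ (fderiv ℝ F) (q, y₀) (Pi.single j 1, 0) (Pi.single j 1, 0))
        - fderiv ℝ F (q, y₀) (0, y n - y₀))
      =o[l] fun n => (∑ j, δ n j ^ 2) + ‖y n - y₀‖ := by
  let D : α → (ι → ℝ) →L[ℝ] ι → ℝ := fun n => ContinuousLinearMap.mul ℝ (ι → ℝ) (-δ n)
  have hD : Tendsto D l (𝓝 0) :=
    ((ContinuousLinearMap.mul ℝ (ι → ℝ)).continuous.tendsto' 0 0 (map_zero _)).comp
      (by simpa only [neg_zero] using hδ.neg)
  have hDsingle (n : α) (j : ι) :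
      (D n (Pi.single j 1), (0 : G)) = -δ n j • (Pi.single j (1 : ℝ), (0 : G)) := by
    simp only [D, ContinuousLinearMap.mul_apply', Prod.smul_mk, smul_zero, ← Pi.single_smul,
      smul_eq_mul, Pi.single_mul_right, ← Pi.neg_apply]
  have hDnorm (n : α) : ‖D n‖ ^ 2 ≤ ∑ j, δ n j ^ 2 := by
    simpa only [neg_sq, Pi.neg_apply, D] using (pow_le_pow_left₀ (norm_nonneg _)
      (ContinuousLinearMap.opNorm_mul_apply_le ℝ (ι → ℝ) (-δ n)) 2).trans (norm_sq_le_sum_sq _)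
  refine ((isLittleO_integral_productKernel_mul_sub hK hF hD hy).trans_isBigO
    (IsBigO.of_norm_le fun n => ?_)).congr_left fun n => ?_
  · rw [Real.norm_of_nonneg (by positivity)]
    gcongr
    exact hDnorm n
  · simp only [hDsingle, map_smul, smul_apply, smul_eq_mul]
    simp only [D, ContinuousLinearMap.mul_apply', ← mul_assoc, sq, neg_mul, mul_neg, neg_neg]

end ProductKernel

theorem stmt10_general {ι α : Type*} [Fintype ι] [DecidableEq ι] {l : Filter α}
    (g : (ι → ℝ) → ℝ → ℝ) (q : ι → ℝ) (y₀ fqy : ℝ)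
    (hg : ContDiffAt ℝ 2 (fun p : (ι → ℝ) × ℝ => g p.1 p.2) (q, y₀))
    (hdy : HasDerivAt (fun y => g q y) fqy y₀) {K : ℝ → ℝ} (hK : IsSecondOrderKernel K)
    {δ : α → ι → ℝ} (hδpos : ∀ n j, 0 < δ n j) (hδ : Tendsto δ l (𝓝 0))
    {y : α → ℝ} (hy : Tendsto y l (𝓝 y₀)) :
    (fun n => ((1 / ∏ j, δ n j) * (∫ x : ι → ℝ, (∏ j, K ((q j - x j) / δ n j)) * g x (y n))
          - g q y₀)
          - ((∫ t, t ^ 2 * K t) / 2) *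
              ∑ j, δ n j ^ 2 * deriv (deriv fun t => g (Function.update q j t) y₀) (q j)
          - fqy * (y n - y₀))
      =o[l] fun n => (∑ j, δ n j ^ 2) + |y n - y₀| := by
  let F : (ι → ℝ) × ℝ → ℝ := fun p => g p.1 p.2
  refine (isLittleO_integral_productKernel_neg_mul_sub (fun _ => hK) hg hδ hy).congr_left
    fun n => ?_
  have hchange : (1 / ∏ j, δ n j) * ∫ x, (∏ j, K ((q j - x j) / δ n j)) * g x (y n)
      = ∫ t, productKernel (fun _ => K) t * F (q + -δ n * t, y n) :=
    integral_productKernel_div_mul (fun _ => K) (fun x => g x (y n)) q (hδpos n)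
  have hpartial_x (j : ι) : deriv (deriv fun t => g (Function.update q j t) y₀) (q j)
      = fderiv ℝ (fderiv ℝ F) (q, y₀) (Pi.single j 1, 0) (Pi.single j 1, 0) :=
    deriv_deriv_update_eq_fderiv_fderiv_single hg j
  have hpartial_y : fderiv ℝ F (q, y₀) (0, y n - y₀) = (y n - y₀) * fqy :=
    fderiv_zero_prod_eq_smul_of_hasDerivAt (hg.differentiableAt two_ne_zero) hdy _
  rw [hchange, hpartial_y, ← Finset.mul_sum]
  simp only [hpartial_x, F]
  ring

/-- Joint bias expansion (Eq. (proofofCLT3)): for `y_n → y₀`, the bias of the kernel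
estimator of `g(q,y₀)` evaluated at `y_n` equals
`(κ₂/2) Σⱼ δ_{n,j}² ∂²g/∂xⱼ²(q,y₀) + f(q,y₀)(y_n − y₀)` up to
`o(Σⱼ δ_{n,j}²) + o(y_n − y₀)`. -/
theorem stmt10 {m : ℕ} (g : (Fin m → ℝ) → ℝ → ℝ) (q : Fin m → ℝ) (y₀ fqy : ℝ)
    (hg : ContDiffAt ℝ 2 (fun p : (Fin m → ℝ) × ℝ => g p.1 p.2) (q, y₀))
    (hdy : HasDerivAt (fun y => g q y) fqy y₀)
    (hgint : ∀ y, Integrable (fun x : Fin m → ℝ => g x y))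
    (K : ℝ → ℝ)
    (hKbdd : ∃ C, ∀ t, |K t| ≤ C) (hKsymm : ∀ t, K (-t) = K t)
    (hKsupp : HasCompactSupport K) (hKnonneg : ∀ t, 0 ≤ K t)
    (hKone : (∫ t, K t) = 1)
    (hKodd : (∫ t, t * K t) = 0)
    (hKsq : Integrable (fun t => t ^ 2 * K t))
    (δ : ℕ → Fin m → ℝ) (hδpos : ∀ n j, 0 < δ n j)
    (hδ0 : ∀ j, Tendsto (fun n => δ n j) atTop (nhds 0))
    (yseq : ℕ → ℝ) (hy : Tendsto yseq atTop (nhds y₀)) :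
    (fun n : ℕ =>
        ((1 / ∏ j, δ n j) *
            (∫ x : Fin m → ℝ, (∏ j, K ((q j - x j) / δ n j)) * g x (yseq n))
          - g q y₀)
          - ((∫ t, t ^ 2 * K t) / 2) *
              ∑ j, (δ n j) ^ 2 *
                deriv (deriv (fun t => g (Function.update q j t) y₀)) (q j)
          - fqy * (yseq n - y₀))
      =o[atTop] (fun n => (∑ j, (δ n j) ^ 2) + |yseq n - y₀|) :=
  stmt10_general g q y₀ fqy hg hdy ⟨hKsupp, hKone, hKodd⟩ hδpos (tendsto_pi_nhds.2 hδ0) hy
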